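/- arXiv:2409.01851 — 2 statements merged into one kernel-verified Lean document; each statement's English description precedes it below -/
import Mathlib

section
/- The ordered set of functions F = [f₀, f₁, f₂] with f₀(u) = u, f₁(u) = (u² + 1) arctan u, f₂(u) = tanh(arctan u) is an ECT-system on some interval (0, r₀) with r₀ > 0; in particular, every nontrivial linear combination c₀ f₀ + c₁ f₁ + c₂ f₂ has at most 2 zeros (counted with multiplicity) on (0, r₀). -/
/-!
The argument is Pólya's division-and-differentiation scheme. If `h` has no zero on `(0, r)` and
the Wronskian `W(h, F) = h F' - F h'` has at most `n` zeros there with multiplicity, then `F` has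
at most `n + 1`, by Rolle's theorem applied to `F / h` (`ZerosLE.of_wr`). With `f₀ = u`,
`f₁ = (u² + 1) arctan u`, `f₂ = tanh (arctan u)`, `A = W(f₀, f₁)` and `B = W(f₀, f₂)`, two such
steps reduce a combination of the three functions to a multiple of `W(A, B)`. So it is enough that
`A` and `W(A, B)` have no zeros on some `(0, r)`.

All these functions are analytic on `ℝ`, so near `0` they have no zeros other than possibly `0`
itself unless they vanish identically (`exists_ne_zero`). Identical vanishing of the Wronskians
would force a linear relation between `f₀, f₁, f₂` (`exists_eq_mul_of_wr_eq_zero`). Such a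
relation is impossible (`lin_indep`): after the substitution `u = tan θ` and multiplication by
`cos² θ` it becomes `a sin θ cos θ + b θ + c tanh θ cos² θ = 0`, which extends analytically to all
real `θ`, and evaluation at `π / 2` and `π` gives `a = b = c = 0`.
-/


open Set Real

/-- The multiplicity of `u` as a zero of `F`: the least `k` such that the `k`-th
derivative of `F` does not vanish at `u` (`0` if `F u ≠ 0`). -/
noncomputable def multAt (F : ℝ → ℝ) (u : ℝ) : ℕ :=
  sInf {k : ℕ | iteratedDeriv k F u ≠ 0}

open scoped ContDiff

/-! ### Wronskians and zeros with multiplicity -/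

/-- The Wronskian `f g' - g f'` of two functions. -/
noncomputable def wr (f g : ℝ → ℝ) : ℝ → ℝ := fun u => f u * deriv g u - g u * deriv f u

/-- `F` has at most `n` zeros on `(0, r)`, counted with multiplicity: whenever `F` vanishes to
order at least `m u` at each `u` of a finite subset `s` of the interval, `∑ u ∈ s, m u ≤ n`.
In contrast with `multAt`, zeros of infinite order are counted properly here. -/
def ZerosLE (r : ℝ) (F : ℝ → ℝ) (n : ℕ) : Prop :=
  ∀ (s : Finset ℝ) (m : ℝ → ℕ), (↑s : Set ℝ) ⊆ Ioo 0 r →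
    (∀ u ∈ s, ∀ j < m u, iteratedDeriv j F u = 0) → ∑ u ∈ s, m u ≤ n

theorem ContDiff.wr {f g : ℝ → ℝ} (hf : ContDiff ℝ ω f) (hg : ContDiff ℝ ω g) :
    ContDiff ℝ ω (wr f g) :=
  (hf.mul (ContDiff.deriv' hg)).sub (hg.mul (ContDiff.deriv' hf))

theorem iteratedDeriv_mul_eq_zero {f g : ℝ → ℝ} (hf : ContDiff ℝ ω f) (hg : ContDiff ℝ ω g)
    {u : ℝ} {n : ℕ} (h : ∀ j < n, iteratedDeriv j g u = 0) {j : ℕ} (hj : j < n) :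
    iteratedDeriv j (fun x => f x * g x) u = 0 := by
  rw [iteratedDeriv_fun_mul (hf.of_le le_top).contDiffAt (hg.of_le le_top).contDiffAt]
  refine Finset.sum_eq_zero fun i _ => ?_
  rw [h (j - i) (by omega), mul_zero]

/-- The Wronskian loses at most one order of vanishing. -/
theorem iteratedDeriv_wr_eq_zero {f g : ℝ → ℝ} (hf : ContDiff ℝ ω f) (hg : ContDiff ℝ ω g)
    {u : ℝ} {n : ℕ} (h : ∀ j < n, iteratedDeriv j g u = 0) {j : ℕ} (hj : j < n - 1) :
    iteratedDeriv j (wr f g) u = 0 := by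
  have hf' : ContDiff ℝ ω (deriv f) := ContDiff.deriv' hf
  have hg' : ContDiff ℝ ω (deriv g) := ContDiff.deriv' hg
  have e : wr f g = (fun x => f x * deriv g x) - fun x => deriv f x * g x := by
    funext x; simp [wr, mul_comm]
  rw [e, iteratedDeriv_sub ((hf.mul hg').of_le le_top).contDiffAt
    ((hf'.mul hg).of_le le_top).contDiffAt,
    iteratedDeriv_mul_eq_zero (n := n - 1) hf hg' _ hj,
    iteratedDeriv_mul_eq_zero (n := n) hf' hg h (by omega), sub_zero]
  intro i hi
  rw [← iteratedDeriv_succ']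
  exact h _ (by omega)

theorem ZerosLE.of_ne_zero {r : ℝ} {F : ℝ → ℝ} (h : ∀ u ∈ Ioo 0 r, F u ≠ 0) : ZerosLE r F 0 := by
  intro s m hs hm
  refine (Finset.sum_eq_zero fun u hu => ?_).le
  by_contra hne
  exact h u (hs hu) (by simpa using hm u hu 0 (Nat.pos_of_ne_zero hne))

theorem ZerosLE.mono {r : ℝ} {F : ℝ → ℝ} {m n : ℕ} (h : ZerosLE r F m) (hmn : m ≤ n) :
    ZerosLE r F n :=
  fun s k hs hk => (h s k hs hk).trans hmn

/-- On an interval where `h ≠ 0`, a zero of `(F / h)' = wr h F / h ^ 2` lies between two zeros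
of `F`. -/
theorem exists_wr_eq_zero {h F : ℝ → ℝ} (hh : ContDiff ℝ ω h) (hF : ContDiff ℝ ω F) {x y : ℝ}
    (hxy : x < y) (hne : ∀ u ∈ Icc x y, h u ≠ 0) (hx : F x = 0) (hy : F y = 0) :
    ∃ z ∈ Ioo x y, wr h F z = 0 := by
  have hdh : Differentiable ℝ h := hh.differentiable (by simp)
  have hdF : Differentiable ℝ F := hF.differentiable (by simp)
  obtain ⟨z, hz, hz0⟩ := exists_deriv_eq_zero (f := fun u => F u / h u) hxy
    (hdF.continuous.continuousOn.div hdh.continuous.continuousOn hne) (by simp [hx, hy])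
  have hhz := hne z (Ioo_subset_Icc_self hz)
  refine ⟨z, hz, ?_⟩
  rw [deriv_fun_div (hdF z) (hdh z) hhz, div_eq_zero_iff] at hz0
  have := hz0.resolve_right (pow_ne_zero 2 hhz)
  unfold wr
  linarith

/-- Rolle's theorem for `F / h`, counting multiplicities. -/
theorem ZerosLE.of_wr {r : ℝ} {h F : ℝ → ℝ} {n : ℕ} (hh : ContDiff ℝ ω h) (hF : ContDiff ℝ ω F)
    (hne : ∀ u ∈ Ioo 0 r, h u ≠ 0) (hW : ZerosLE r (wr h F) n) : ZerosLE r F (n + 1) := by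
  classical
  intro s m hs hm
  -- Only points of positive multiplicity, that is, zeros of `F`, matter.
  set s₀ := s.filter (fun u => 0 < m u) with hs₀
  have hs₀s : ∀ u ∈ s₀, u ∈ Ioo 0 r ∧ F u = 0 ∧ 0 < m u ∧ u ∈ s := by
    intro u hu
    rw [hs₀, Finset.mem_filter] at hu
    exact ⟨hs hu.1, by simpa using hm u hu.1 0 hu.2, hu.2, hu.1⟩
  have hsum : ∑ u ∈ s, m u = ∑ u ∈ s₀, m u := by
    rw [hs₀, Finset.sum_filter]
    refine Finset.sum_congr rfl fun u _ => ?_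
    split_ifs <;> omega
  have hrolle : ∀ x y, ∃ z, x ∈ s₀ → y ∈ s₀ → x < y → z ∈ Ioo x y ∧ wr h F z = 0 := by
    intro x y
    by_cases hc : x ∈ s₀ ∧ y ∈ s₀ ∧ x < y
    · obtain ⟨hx, hy, hxy⟩ := hc
      obtain ⟨z, hz, hz0⟩ := exists_wr_eq_zero hh hF hxy
        (fun u hu => hne u ⟨(hs₀s x hx).1.1.trans_le hu.1, hu.2.trans_lt (hs₀s y hy).1.2⟩)
        (hs₀s x hx).2.1 (hs₀s y hy).2.1
      exact ⟨z, fun _ _ _ => ⟨hz, hz0⟩⟩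
    · exact ⟨0, fun hx hy hxy => (hc ⟨hx, hy, hxy⟩).elim⟩
  choose Z hZ using hrolle
  set t := ((s₀ ×ˢ s₀).filter (fun p => p.1 < p.2)).image (fun p => Z p.1 p.2) with ht
  have htmem : ∀ z ∈ t, z ∈ Ioo 0 r ∧ wr h F z = 0 := by
    intro z hz
    simp only [ht, Finset.mem_image, Finset.mem_filter, Finset.mem_product, Prod.exists] at hz
    obtain ⟨x, y, ⟨⟨hx, hy⟩, hxy⟩, rfl⟩ := hz
    obtain ⟨h1, h2⟩ := hZ x y hx hy hxy
    exact ⟨⟨(hs₀s x hx).1.1.trans h1.1, h1.2.trans (hs₀s y hy).1.2⟩, h2⟩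
  have hcard : s₀.card ≤ (t \ s₀).card + 1 := by
    refine Finset.card_le_sdiff_of_interleaved fun x hx y hy hxy _ => ⟨Z x y, ?_, ?_⟩
    · simp only [ht, Finset.mem_image, Finset.mem_filter, Finset.mem_product, Prod.exists]
      exact ⟨x, y, ⟨⟨hx, hy⟩, hxy⟩, rfl⟩
    · exact (hZ x y hx hy hxy).1
  -- The Wronskian vanishes to order `m u - 1` at the points of `s₀`, and at the Rolle points.
  have key := hW (s₀ ∪ t \ s₀) (fun u => if u ∈ s₀ then m u - 1 else 1)
    (by
      intro u hu
      rw [Finset.mem_coe, Finset.mem_union, Finset.mem_sdiff] at hu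
      rcases hu with hu | hu
      · exact (hs₀s u hu).1
      · exact (htmem u hu.1).1)
    (by
      intro u hu j hj
      rw [Finset.mem_union, Finset.mem_sdiff] at hu
      split_ifs at hj with hc
      · exact iteratedDeriv_wr_eq_zero hh hF (hm u (hs₀s u hc).2.2.2) hj
      · obtain rfl : j = 0 := by omega
        simpa using (htmem u (hu.resolve_left hc).1).2)
  rw [Finset.sum_union Finset.disjoint_sdiff,
    Finset.sum_congr rfl (g := fun u => m u - 1) (fun u hu => by simp [hu]),
    Finset.sum_congr (s₁ := t \ s₀) rfl (g := fun _ => 1)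
      (fun u hu => by simp [(Finset.mem_sdiff.1 hu).2])] at key
  have hsplit : ∑ u ∈ s₀, m u = ∑ u ∈ s₀, (m u - 1) + s₀.card := by
    rw [Finset.card_eq_sum_ones, ← Finset.sum_add_distrib]
    refine Finset.sum_congr rfl fun u hu => ?_
    have := (hs₀s u hu).2.2.1
    omega
  rw [← Finset.card_eq_sum_ones] at key
  omega

/-! ### Analytic functions and linear dependence -/

/-- A nonzero analytic function has isolated zeros, hence none just to the right of `0`. -/
theorem exists_ne_zero {f : ℝ → ℝ} (hf : ContDiff ℝ ω f) (h0 : f ≠ 0) :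
    ∃ r > 0, ∀ u ∈ Ioo 0 r, f u ≠ 0 := by
  have ha : AnalyticOnNhd ℝ f univ := hf.analyticOnNhd
  rcases (ha 0 (mem_univ _)).eventually_eq_zero_or_eventually_ne_zero with h | h
  · exact (h0 (AnalyticOnNhd.eq_of_eventuallyEq ha analyticOnNhd_const h)).elim
  · rw [eventually_nhdsWithin_iff, Metric.eventually_nhds_iff] at h
    obtain ⟨r, hr, h⟩ := h
    refine ⟨r, hr, fun u hu => h ?_ hu.1.ne'⟩
    rw [Real.dist_eq, sub_zero, abs_of_pos hu.1]
    exact hu.2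

/-- Analytic functions with identically vanishing Wronskian are proportional. -/
theorem exists_eq_mul_of_wr_eq_zero {f g : ℝ → ℝ} (hf : ContDiff ℝ ω f) (hg : ContDiff ℝ ω g)
    (h0 : f ≠ 0) (hW : wr f g = 0) : ∃ K : ℝ, ∀ u, g u = K * f u := by
  obtain ⟨r, hr, hne⟩ := exists_ne_zero hf h0
  have hdf : Differentiable ℝ f := hf.differentiable (by simp)
  have hdg : Differentiable ℝ g := hg.differentiable (by simp)
  have hmid : r / 2 ∈ Ioo 0 r := ⟨by linarith, by linarith⟩
  refine ⟨g (r / 2) / f (r / 2), fun u => ?_⟩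
  have hconst : ∀ u ∈ Ioo 0 r, g u = g (r / 2) / f (r / 2) * f u := by
    intro u hu
    have := isOpen_Ioo.is_const_of_deriv_eq_zero (f := fun u => g u / f u) isPreconnected_Ioo
      (hdg.differentiableOn.div hdf.differentiableOn hne)
      (fun v hv => by
        have hv0 : f v * deriv g v - g v * deriv f v = 0 := congrFun hW v
        rw [deriv_fun_div (hdg v) (hdf v) (hne v hv), Pi.zero_apply, div_eq_zero_iff]
        left; linarith) hu hmid
    rw [← this, div_mul_cancel₀ _ (hne u hu)]
  exact congrFun (AnalyticOnNhd.eq_of_eventuallyEq hg.analyticOnNhd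
    (contDiff_const.mul hf).analyticOnNhd (z₀ := r / 2)
    (Filter.eventually_of_mem (isOpen_Ioo.mem_nhds hmid) hconst)) u

/-! ### The functions `u`, `(u² + 1) arctan u`, `tanh (arctan u)` -/

theorem contDiff_tanh : ContDiff ℝ ω Real.tanh := by
  have : Real.tanh = fun x => Real.sinh x / Real.cosh x := funext Real.tanh_eq_sinh_div_cosh
  rw [this]
  exact Real.contDiff_sinh.div Real.contDiff_cosh fun x => (Real.cosh_pos x).ne'

theorem contDiff_f₁ : ContDiff ℝ ω fun u : ℝ => (u ^ 2 + 1) * Real.arctan u :=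
  ((contDiff_id.pow 2).add contDiff_const).mul Real.contDiff_arctan

theorem contDiff_f₂ : ContDiff ℝ ω fun u : ℝ => Real.tanh (Real.arctan u) :=
  contDiff_tanh.comp Real.contDiff_arctan

/-- Linear independence, by the substitution `u = tan θ` and analytic continuation in `θ`. -/
theorem lin_indep {a b c : ℝ}
    (h : ∀ u : ℝ, a * u + b * ((u ^ 2 + 1) * Real.arctan u) + c * Real.tanh (Real.arctan u) = 0) :
    a = 0 ∧ b = 0 ∧ c = 0 := by
  have hH : ∀ θ : ℝ, a * (sin θ * cos θ) + b * θ + c * (Real.tanh θ * cos θ ^ 2) = 0 := by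
    have hc : ContDiff ℝ ω
        fun θ : ℝ => a * (sin θ * cos θ) + b * θ + c * (Real.tanh θ * cos θ ^ 2) :=
      ((contDiff_const.mul (Real.contDiff_sin.mul Real.contDiff_cos)).add
        (contDiff_const.mul contDiff_id)).add
        (contDiff_const.mul (contDiff_tanh.mul (Real.contDiff_cos.pow 2)))
    -- Near `0` this is the hypothesis at `u = tan θ` times `cos² θ`.
    refine congrFun (AnalyticOnNhd.eq_of_eventuallyEq hc.analyticOnNhd
      (g := 0) analyticOnNhd_const (z₀ := 0) ?_)
    have hpi := Real.pi_pos
    filter_upwards [isOpen_Ioo.mem_nhds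
      (show (0 : ℝ) ∈ Ioo (-(π / 2)) (π / 2) from ⟨by linarith, by linarith⟩)] with θ hθ
    have hcos := (Real.cos_pos_of_mem_Ioo hθ).ne'
    have hs := Real.sin_sq_add_cos_sq θ
    have h1 := h (tan θ)
    rw [Real.arctan_tan hθ.1 hθ.2] at h1
    have h2 : tan θ * cos θ = sin θ := Real.tan_mul_cos hcos
    have h3 : (tan θ ^ 2 + 1) * cos θ ^ 2 = 1 := by rw [add_mul, ← mul_pow, h2]; linarith
    rw [Pi.zero_apply]
    linear_combination cos θ ^ 2 * h1 - a * cos θ * h2 - b * θ * h3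
  have hpi := Real.pi_pos
  have hb : b = 0 := by
    have := hH (π / 2)
    simp only [cos_pi_div_two] at this
    have h' : b * (π / 2) = 0 := by linarith
    exact (mul_eq_zero.1 h').resolve_right (by positivity)
  have ht : ∀ x : ℝ, 0 < x → Real.tanh x ≠ 0 := fun x hx => by
    rw [Real.tanh_eq_sinh_div_cosh]
    exact (div_pos (Real.sinh_pos_iff.2 hx) (Real.cosh_pos x)).ne'
  have hc : c = 0 := by
    have := hH π
    simp only [sin_pi, cos_pi, hb] at this
    have h' : c * Real.tanh π = 0 := by linarith
    exact (mul_eq_zero.1 h').resolve_right (ht π hpi)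
  have ha := h 1
  simp only [hb, hc] at ha
  exact ⟨by linarith, hb, hc⟩

/-! ### Zeros of linear combinations -/

theorem wr_self (f : ℝ → ℝ) (u : ℝ) : wr f f u = 0 := by simp [wr]

theorem wr_add_mul {f g k : ℝ → ℝ} (hg : ContDiff ℝ ω g) (hk : ContDiff ℝ ω k) (b c u : ℝ) :
    wr f (fun u => b * g u + c * k u) u = b * wr f g u + c * wr f k u := by
  have hdg : DifferentiableAt ℝ g u := hg.differentiable (by simp) u
  have hdk : DifferentiableAt ℝ k u := hk.differentiable (by simp) u
  simp only [wr]
  rw [deriv_fun_add (hdg.const_mul b) (hdk.const_mul c), deriv_const_mul_field,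
    deriv_const_mul_field]
  ring

/-- Zero bounds for combinations of `f`, `g`, `k` when the iterated Wronskians have no zeros. -/
theorem zerosLE_comb {r : ℝ} {f g k : ℝ → ℝ} (hf : ContDiff ℝ ω f) (hg : ContDiff ℝ ω g)
    (hk : ContDiff ℝ ω k) (h₀ : ∀ u ∈ Ioo 0 r, f u ≠ 0) (h₁ : ∀ u ∈ Ioo 0 r, wr f g u ≠ 0)
    (h₂ : ∀ u ∈ Ioo 0 r, wr (wr f g) (wr f k) u ≠ 0) (a b c : ℝ) :
    (c ≠ 0 → ZerosLE r (fun u => a * f u + b * g u + c * k u) 2) ∧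
    (c = 0 → b ≠ 0 → ZerosLE r (fun u => a * f u + b * g u + c * k u) 1) ∧
    (c = 0 → b = 0 → a ≠ 0 → ZerosLE r (fun u => a * f u + b * g u + c * k u) 0) := by
  have hbc : ContDiff ℝ ω fun u => b * g u + c * k u :=
    (contDiff_const.mul hg).add (contDiff_const.mul hk)
  have hF : ContDiff ℝ ω fun u => a * f u + b * g u + c * k u :=
    ((contDiff_const.mul hf).add (contDiff_const.mul hg)).add (contDiff_const.mul hk)
  have hA := hf.wr hg
  have hB := hf.wr hk
  have e₁ : wr f (fun u => a * f u + b * g u + c * k u) =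
      fun u => b * wr f g u + c * wr f k u := by
    funext u
    have e : (fun u => a * f u + b * g u + c * k u) =
        fun u => a * f u + 1 * (b * g u + c * k u) := by funext u; ring
    rw [e, wr_add_mul hf hbc, wr_add_mul hg hk, wr_self]
    ring
  refine ⟨fun hc => ?_, fun hc hb => ?_, fun hc hb ha => ?_⟩
  · refine ZerosLE.of_wr hf hF h₀ ?_
    rw [e₁]
    refine ZerosLE.of_wr hA ((contDiff_const.mul hA).add (contDiff_const.mul hB)) h₁ ?_
    refine ZerosLE.of_ne_zero fun u hu => ?_
    rw [wr_add_mul hA hB, wr_self, mul_zero, zero_add]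
    exact mul_ne_zero hc (h₂ u hu)
  · refine ZerosLE.of_wr hf hF h₀ ?_
    rw [e₁]
    refine ZerosLE.of_ne_zero fun u hu => ?_
    rw [hc, zero_mul, add_zero]
    exact mul_ne_zero hb (h₁ u hu)
  · refine ZerosLE.of_ne_zero fun u hu => ?_
    simp only [hc, hb, zero_mul, add_zero]
    exact mul_ne_zero ha (h₀ u hu)

/-- `multAt` never exceeds the order of vanishing; it is `0` at a zero of infinite order. -/
theorem ZerosLE.sum_multAt_le {r : ℝ} {F : ℝ → ℝ} {n : ℕ} (h : ZerosLE r F n) {s : Finset ℝ}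
    (hs : (↑s : Set ℝ) ⊆ Ioo 0 r) : ∑ u ∈ s, multAt F u ≤ n :=
  h s (multAt F) hs fun u _ j hj => by
    by_contra hne
    exact Nat.notMem_of_lt_sInf hj hne

theorem exists_wr_ne_zero : ∃ r > 0, ∀ u ∈ Ioo (0 : ℝ) r,
    wr (fun u => u) (fun u => (u ^ 2 + 1) * Real.arctan u) u ≠ 0 ∧
    wr (wr (fun u => u) (fun u => (u ^ 2 + 1) * Real.arctan u))
      (wr (fun u => u) (fun u => Real.tanh (Real.arctan u))) u ≠ 0 := by
  have hid : ContDiff ℝ ω fun u : ℝ => u := contDiff_id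
  have hid0 : (fun u : ℝ => u) ≠ 0 := fun h => one_ne_zero (congrFun h (1 : ℝ))
  have hA := hid.wr contDiff_f₁
  have hB := hid.wr contDiff_f₂
  have hA0 : wr (fun u => u) (fun u => (u ^ 2 + 1) * Real.arctan u) ≠ 0 := by
    intro h
    obtain ⟨K, hK⟩ := exists_eq_mul_of_wr_eq_zero hid contDiff_f₁ hid0 h
    have := (lin_indep (a := -K) (b := 1) (c := 0) fun u => by linear_combination hK u).2.1
    exact one_ne_zero this
  have hW0 : wr (wr (fun u => u) (fun u => (u ^ 2 + 1) * Real.arctan u))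
      (wr (fun u => u) (fun u => Real.tanh (Real.arctan u))) ≠ 0 := by
    intro h
    obtain ⟨K, hK⟩ := exists_eq_mul_of_wr_eq_zero hA hB hA0 h
    -- `W(u, f₂) = K W(u, f₁)` says that `u` and `f₂ - K f₁` have zero Wronskian.
    obtain ⟨C, hC⟩ := exists_eq_mul_of_wr_eq_zero hid
      ((contDiff_const.mul contDiff_f₁).add (contDiff_const.mul contDiff_f₂)) hid0
      (funext fun u => by
        rw [wr_add_mul contDiff_f₁ contDiff_f₂ (-K) 1, hK u, Pi.zero_apply]
        ring)
    have := (lin_indep (a := -C) (b := -K) (c := 1) fun u => by linear_combination hC u).2.2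
    exact one_ne_zero this
  obtain ⟨r₁, hr₁, h₁⟩ := exists_ne_zero hA hA0
  obtain ⟨r₂, hr₂, h₂⟩ := exists_ne_zero (hA.wr hB) hW0
  exact ⟨min r₁ r₂, lt_min hr₁ hr₂, fun u hu =>
    ⟨h₁ u ⟨hu.1, hu.2.trans_le (min_le_left _ _)⟩, h₂ u ⟨hu.1, hu.2.trans_le (min_le_right _ _)⟩⟩⟩

/-- The ordered family `[u, (u²+1) arctan u, tanh (arctan u)]` is an ECT-system on some
interval `(0, r₀)`: for each `k ≤ 2`, every nontrivial linear combination of the first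
`k+1` functions has at most `k` zeros on `(0, r₀)`, counted with multiplicity.  In
particular every nontrivial combination of all three has at most `2` zeros counted with
multiplicity there. -/
theorem stmt4 :
    ∃ r₀ > (0 : ℝ), ∀ k : ℕ, k ≤ 2 → ∀ c : Fin 3 → ℝ,
      (∀ i : Fin 3, k < (i : ℕ) → c i = 0) → (¬ ∀ i, c i = 0) →
      ∀ s : Finset ℝ, (↑s : Set ℝ) ⊆ Ioo 0 r₀ →
        (∑ u ∈ s, multAt
          (fun u => c 0 * u + c 1 * ((u ^ 2 + 1) * Real.arctan u)
            + c 2 * Real.tanh (Real.arctan u)) u) ≤ k := by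
  obtain ⟨r, hr, hW⟩ := exists_wr_ne_zero
  refine ⟨r, hr, fun k hk c hck hc s hs => ?_⟩
  obtain ⟨z₂, z₁, z₀⟩ := zerosLE_comb contDiff_id contDiff_f₁ contDiff_f₂
    (fun u hu => hu.1.ne') (fun u hu => (hW u hu).1) (fun u hu => (hW u hu).2) (c 0) (c 1) (c 2)
  refine ZerosLE.sum_multAt_le (r := r) ?_ hs
  by_cases h2 : c 2 = 0
  · by_cases h1 : c 1 = 0
    · have h0 : c 0 ≠ 0 := fun h0 => hc fun i => by fin_cases i <;> assumption
      exact (z₀ h2 h1 h0).mono (Nat.zero_le _)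
    · have : 1 ≤ k := by
        by_contra hlt
        exact h1 (hck 1 (by simpa using hlt))
      exact (z₁ h2 h1).mono this
  · have : 2 ≤ k := by
      by_contra hlt
      exact h2 (hck 2 (by simpa using hlt))
    exact (z₂ h2).mono this
end

section
/- Simple-zero persistence via Lyapunov–Schmidt reduction: let m ≥ n, D ⊂ ℝᵐ open, V ⊂ ℝⁿ open bounded, and g : D × (−ε₀, ε₀) → ℝᵐ a C² map of the form g(z, ε) = g₀(z) + ε g₁(z) + O(ε²). Let v : closure(V) → ℝ^{m−n} be C² and Z = {z_u = (u, v(u)) : u ∈ closure(V)} ⊂ D. Write Dg₀(z_u) in block form and denote by Γ_u its upper-right n×(m−n) block and Δ_u its lower-right (m−n)×(m−n) block. Assume g₀(z_u) = 0 and det Δ_u ≠ 0 for all u ∈ closure(V). Define f₁(u) = π₁(g₁(z_u)) − Γ_u Δ_u^{−1} π₂(g₁(z_u)), where π₁, π₂ are the projections onto the first n and last m−n coordinates of ℝᵐ. If u* ∈ V satisfies f₁(u*) = 0 and det Df₁(u*) ≠ 0, then for each sufficiently small ε there exists z_ε ∈ D with g(z_ε, ε) = 0 and z_ε → z_{u*}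 as ε → 0. -/
/-!
Blow up transversally to the manifold of zeros.  With `H(u, y, ε) = g((u, v(u) + y), ε)`, which
vanishes on `{(u, 0, 0)}`, the rescaled maps `(u, w) ↦ ε⁻¹ H(u, εw, ε)` converge as `ε → 0`, together
with their derivatives, to the bifurcation map

  `(u, w) ↦ DH(u, 0, 0)(0, w, 1) = Dg₀(z_u)(0, w) + g₁(z_u)`.

The second component of its zero equation reads `Δ_u w + π₂ g₁(z_u) = 0`, which is solved by a unique
differentiable `w(u)`; substituting `w(u)` into the first component yields `f₁(u)`.  Hence a simple
zero `u*` of `f₁` gives a zero `(u*, w(u*))` of the bifurcation map with invertible derivative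
(`injective_bifDeriv`), and the quantitative inverse function theorem produces a nearby zero of the
rescaled map for each small `ε ≠ 0` (`exists_zero_of_bifMap`).

The factor `ε⁻¹` costs one derivative: the `C¹` convergence (`tendsto_rescaled_deriv`) follows from
strict differentiability of `DH`, which is where `g ∈ C²` is used.  The symmetry of `D²H` matches the
limit of the derivatives with the derivative of the limit (`hasFDerivAt_bifMap`).
-/

open Set Filter Topology Asymptotics

noncomputable section

variable {E F P : Type*} [NormedAddCommGroup E] [NormedSpace ℝ E]
  [NormedAddCommGroup F] [NormedSpace ℝ F] [NormedAddCommGroup P] [NormedSpace ℝ P]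

/-- The bifurcation map `(u, w) ↦ DH(u, 0, 0)(0, w, 1)`: the limit as `ε → 0` of the rescaled maps
`(u, w) ↦ ε⁻¹ H(u, εw, ε)` when `H` vanishes on `{(u, 0, 0)}`. -/
def bifMap (H : E × F × ℝ → P) (x : E × F) : P :=
  fderiv ℝ H (x.1, 0, 0) (0, x.2, 1)

/-- The derivative of `bifMap H` at `(u₀, w₀)`, written as
`(h, k) ↦ D²H(u₀, 0, 0)[(0, w₀, 1), (h, 0, 0)] + DH(u₀, 0, 0)(0, k, 0)`.  The slots of the second
derivative are ordered as they arise when differentiating `ε⁻¹ H(u, εw, ε)`. -/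
def bifDeriv (H : E × F × ℝ → P) (u₀ : E) (w₀ : F) : E × F →L[ℝ] P :=
  ((fderiv ℝ (fderiv ℝ H) (u₀, 0, 0) (0, w₀, 1)).comp (.inl ℝ E (F × ℝ))).comp (.fst ℝ E F) +
  ((fderiv ℝ H (u₀, 0, 0)).comp ((ContinuousLinearMap.inr ℝ E (F × ℝ)).comp
    (.inl ℝ F ℝ))).comp (.snd ℝ E F)

lemma bifDeriv_apply (H : E × F × ℝ → P) (u₀ : E) (w₀ : F) (h : E) (k : F) :
    bifDeriv H u₀ w₀ (h, k) =
      fderiv ℝ (fderiv ℝ H) (u₀, 0, 0) (0, w₀, 1) (h, 0, 0) + fderiv ℝ H (u₀, 0, 0) (0, k, 0) := by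
  rfl

/-- Differentiating `bifMap` puts the two directions into `D²H` in the opposite order to `bifDeriv`;
the symmetry of the second derivative identifies them. -/
lemma hasFDerivAt_bifMap {H : E × F × ℝ → P} {u₀ : E} (hH : ContDiffAt ℝ 2 H (u₀, 0, 0)) (w₀ : F) :
    HasFDerivAt (bifMap H) (bifDeriv H u₀ w₀) (u₀, w₀) := by
  have hB : HasFDerivAt (fderiv ℝ H) (fderiv ℝ (fderiv ℝ H) (u₀, 0, 0)) (u₀, 0, 0) :=
    ((hH.fderiv_right (m := 1) (by norm_num)).differentiableAt (by norm_num)).hasFDerivAt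
  have hq : HasFDerivAt (fun x : E × F => ((x.1, 0, 0) : E × F × ℝ))
      ((ContinuousLinearMap.inl ℝ E (F × ℝ)).comp (.fst ℝ E F)) (u₀, w₀) :=
    ((ContinuousLinearMap.inl ℝ E (F × ℝ)).comp (.fst ℝ E F)).hasFDerivAt
  have hr : HasFDerivAt (fun x : E × F => ((0, x.2, 1) : E × F × ℝ))
      (((ContinuousLinearMap.inr ℝ E (F × ℝ)).comp (.inl ℝ F ℝ)).comp (.snd ℝ E F)) (u₀, w₀) := by
    have := (((ContinuousLinearMap.inr ℝ E (F × ℝ)).comp (.inl ℝ F ℝ)).comp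
      (.snd ℝ E F)).hasFDerivAt (x := (u₀, w₀)) |>.add_const ((0, 0, 1) : E × F × ℝ)
    refine this.congr_of_eventuallyEq (.of_forall fun x => ?_)
    ext <;> simp
  have hc := (hB.comp (u₀, w₀) hq).clm_apply hr
  have hs := hH.isSymmSndFDerivAt (by simp)
  refine hc.congr_fderiv ?_
  refine ContinuousLinearMap.ext fun ⟨h, k⟩ => ?_
  change fderiv ℝ H (u₀, 0, 0) (0, k, 0) +
    fderiv ℝ (fderiv ℝ H) (u₀, 0, 0) (h, 0, 0) (0, w₀, 1) = _
  rw [bifDeriv_apply, add_comm, hs.eq]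

/-- Convergence of the derivative of the rescaled map, jointly as `ε → 0` and `(u, w) → (u₀, w₀)`.
The factor `ε⁻¹` is absorbed by strict differentiability of `DH`. -/
lemma tendsto_rescaled_deriv {H : E × F × ℝ → P} {u₀ : E} (hH : ContDiffAt ℝ 2 H (u₀, 0, 0))
    (w₀ : F) :
    Tendsto (fun q : ℝ × (E × F) =>
        ((q.1⁻¹ • (fderiv ℝ H (q.2.1, q.1 • q.2.2, q.1) - fderiv ℝ H (q.2.1, 0, 0))).comp
          (.inl ℝ E (F × ℝ))).comp (.fst ℝ E F) +
        ((fderiv ℝ H (q.2.1, q.1 • q.2.2, q.1)).comp ((ContinuousLinearMap.inr ℝ E (F × ℝ)).comp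
          (.inl ℝ F ℝ))).comp (.snd ℝ E F))
      (𝓝[≠] 0 ×ˢ 𝓝 (u₀, w₀)) (𝓝 (bifDeriv H u₀ w₀)) := by
  set l : Filter (ℝ × (E × F)) := 𝓝[≠] 0 ×ˢ 𝓝 (u₀, w₀) with hl
  have hle : l ≤ 𝓝 (0, (u₀, w₀)) := by
    rw [hl, nhds_prod_eq (x := (0 : ℝ))]; exact Filter.prod_mono nhdsWithin_le_nhds le_rfl
  have hne : ∀ᶠ q in l, q.1 ≠ 0 :=
    tendsto_fst.eventually (eventually_mem_nhdsWithin : ∀ᶠ x : ℝ in 𝓝[≠] 0, x ∈ ({0}ᶜ : Set ℝ))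
  have hp : Tendsto (fun q : ℝ × (E × F) => ((q.2.1, q.1 • q.2.2, q.1) : E × F × ℝ)) l
      (𝓝 (u₀, 0, 0)) := by
    have : Continuous (fun q : ℝ × (E × F) => ((q.2.1, q.1 • q.2.2, q.1) : E × F × ℝ)) := by
      fun_prop
    simpa using (this.tendsto (0, (u₀, w₀))).mono_left hle
  have hr : Tendsto (fun q : ℝ × (E × F) => ((q.2.1, 0, 0) : E × F × ℝ)) l (𝓝 (u₀, 0, 0)) := by
    have : Continuous (fun q : ℝ × (E × F) => ((q.2.1, 0, 0) : E × F × ℝ)) := by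
      fun_prop
    simpa using (this.tendsto (0, (u₀, w₀))).mono_left hle
  have hd : Tendsto (fun q : ℝ × (E × F) => ((0, q.2.2, 1) : E × F × ℝ)) l (𝓝 (0, w₀, 1)) := by
    have : Continuous (fun q : ℝ × (E × F) => ((0, q.2.2, 1) : E × F × ℝ)) := by
      fun_prop
    simpa using (this.tendsto (0, (u₀, w₀))).mono_left hle
  have hDH : ContDiffAt ℝ 1 (fderiv ℝ H) (u₀, 0, 0) := hH.fderiv_right (by norm_num)
  have hstrict := hDH.hasStrictFDerivAt (by norm_num)
  set B := fderiv ℝ (fderiv ℝ H) (u₀, 0, 0)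
  have hpr : ∀ q : ℝ × (E × F), ((q.2.1, q.1 • q.2.2, q.1) : E × F × ℝ) - (q.2.1, 0, 0)
      = q.1 • (0, q.2.2, 1) := by
    intro q; ext <;> simp
  have ho := hstrict.isLittleO.comp_tendsto (hp.prodMk_nhds hr)
  simp only [Function.comp_def, hpr] at ho
  have hO : (fun q : ℝ × (E × F) => q.1 • ((0, q.2.2, 1) : E × F × ℝ)) =O[l] fun q => q.1 := by
    simpa using (isBigO_refl (fun q : ℝ × (E × F) => q.1) l).smul (hd.isBigO_one ℝ)
  have ho1 := ho.trans_isBigO hO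
  have hrem : Tendsto (fun q : ℝ × (E × F) => q.1⁻¹ • (fderiv ℝ H (q.2.1, q.1 • q.2.2, q.1) -
      fderiv ℝ H (q.2.1, 0, 0) - B (q.1 • (0, q.2.2, 1)))) l (𝓝 0) := by
    have := (isBigO_refl (fun q : ℝ × (E × F) => q.1⁻¹) l).smul_isLittleO ho1
    have h1 : (fun q : ℝ × (E × F) => q.1⁻¹ • q.1) =O[l] fun _ => (1 : ℝ) := by
      refine IsBigO.of_bound 1 ?_
      filter_upwards [hne] with q hq
      simp [hq]
    exact (isLittleO_one_iff ℝ).1 (this.trans_isBigO h1)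
  have hquot : Tendsto (fun q : ℝ × (E × F) => q.1⁻¹ • (fderiv ℝ H (q.2.1, q.1 • q.2.2, q.1) -
      fderiv ℝ H (q.2.1, 0, 0))) l (𝓝 (B (0, w₀, 1))) := by
    have h2 := hrem.add ((B.continuous.tendsto _).comp hd)
    rw [zero_add] at h2
    refine h2.congr' ?_
    filter_upwards [hne] with q hq
    simp only [Function.comp_def, map_smul, smul_sub]
    rw [inv_smul_smul₀ hq, sub_add_cancel]
  have hcont := hDH.continuousAt.tendsto.comp hp
  have hcomp : ∀ {M : ℝ × (E × F) → E × F × ℝ →L[ℝ] P} {M₀ : E × F × ℝ →L[ℝ] P}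
      (T : E × F →L[ℝ] E × F × ℝ), Tendsto M l (𝓝 M₀) →
      Tendsto (fun q => (M q).comp T) l (𝓝 (M₀.comp T)) := fun T hM =>
    ((show Continuous fun N : E × F × ℝ →L[ℝ] P => N.comp T by fun_prop).tendsto _).comp hM
  exact (hcomp ((ContinuousLinearMap.inl ℝ E (F × ℝ)).comp (.fst ℝ E F)) hquot).add
    (hcomp (((ContinuousLinearMap.inr ℝ E (F × ℝ)).comp (.inl ℝ F ℝ)).comp (.snd ℝ E F)) hcont)

/-- The derivative of the rescaled map, where `DH(u, 0, 0)` may be subtracted in the `u` direction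
because `H` vanishes along `{(u, 0, 0)}`. -/
lemma hasFDerivAt_rescaled {H : E × F × ℝ → P} {ε : ℝ} {x : E × F} (hε : ε ≠ 0)
    (hd : DifferentiableAt ℝ H (x.1, ε • x.2, ε)) (hd0 : DifferentiableAt ℝ H (x.1, 0, 0))
    (h0 : ∀ᶠ u in 𝓝 x.1, H (u, 0, 0) = 0) :
    HasFDerivAt (fun x : E × F => ε⁻¹ • H (x.1, ε • x.2, ε))
      (((ε⁻¹ • (fderiv ℝ H (x.1, ε • x.2, ε) - fderiv ℝ H (x.1, 0, 0))).comp
          (.inl ℝ E (F × ℝ))).comp (.fst ℝ E F) +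
        ((fderiv ℝ H (x.1, ε • x.2, ε)).comp ((ContinuousLinearMap.inr ℝ E (F × ℝ)).comp
          (.inl ℝ F ℝ))).comp (.snd ℝ E F)) x := by
  have hz : (fderiv ℝ H (x.1, 0, 0)).comp (.inl ℝ E (F × ℝ)) = 0 := by
    have h1 : HasFDerivAt (fun u : E => H (u, 0, 0))
        ((fderiv ℝ H (x.1, 0, 0)).comp (.inl ℝ E (F × ℝ))) x.1 :=
      HasFDerivAt.comp (g := H) x.1 hd0.hasFDerivAt
        (ContinuousLinearMap.inl ℝ E (F × ℝ)).hasFDerivAt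
    exact h1.unique ((hasFDerivAt_const (0 : P) x.1).congr_of_eventuallyEq h0)
  have hin : HasFDerivAt (fun x : E × F => ((x.1, ε • x.2, ε) : E × F × ℝ))
      ((ContinuousLinearMap.fst ℝ E F).prod ((ε • ContinuousLinearMap.snd ℝ E F).prod 0)) x :=
    hasFDerivAt_fst.prodMk ((hasFDerivAt_snd.const_smul ε).prodMk (hasFDerivAt_const ε x))
  have hc := (HasFDerivAt.comp (g := H) x hd.hasFDerivAt hin).const_smul ε⁻¹
  refine hc.congr_fderiv ?_
  refine ContinuousLinearMap.ext fun ⟨h, k⟩ => ?_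
  have hzh : fderiv ℝ H (x.1, 0, 0) (h, 0, 0) = 0 := DFunLike.congr_fun hz h
  change ε⁻¹ • fderiv ℝ H (x.1, ε • x.2, ε) (h, ε • k, 0) =
    ε⁻¹ • (fderiv ℝ H (x.1, ε • x.2, ε) (h, 0, 0) - fderiv ℝ H (x.1, 0, 0) (h, 0, 0)) +
      fderiv ℝ H (x.1, ε • x.2, ε) (0, k, 0)
  have hsplit : ((h, ε • k, 0) : E × F × ℝ) = (h, 0, 0) + ε • (0, k, 0) := by simp
  rw [hzh, sub_zero, hsplit, map_add, map_smul, smul_add, inv_smul_smul₀ hε]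

/-- Persistence of nondegenerate zeros of the bifurcation map.  For small `ε ≠ 0` the rescaled map
is uniformly approximated near `(u₀, w₀)` by an invertible linear map and is small at `(u₀, w₀)`,
so the quantitative inverse function theorem gives it a zero. -/
theorem exists_zero_of_bifMap {E F : Type*} [NormedAddCommGroup E] [NormedSpace ℝ E]
    [NormedAddCommGroup F] [NormedSpace ℝ F] [FiniteDimensional ℝ E] [FiniteDimensional ℝ F]
    {H : E × F × ℝ → E × F} {u₀ : E} (hH : ContDiffAt ℝ 2 H (u₀, 0, 0))
    (h0 : ∀ᶠ u in 𝓝 u₀, H (u, 0, 0) = 0) (w₀ : F) (hz : bifMap H (u₀, w₀) = 0)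
    (hinj : Function.Injective (bifDeriv H u₀ w₀)) {U : Set (E × F)} (hU : U ∈ 𝓝 (u₀, w₀)) :
    ∀ᶠ ε in 𝓝[≠] (0 : ℝ), ∃ x ∈ U, H (x.1, ε • x.2, ε) = 0 := by
  have : CompleteSpace (E × F) := FiniteDimensional.complete ℝ _
  let e : (E × F) ≃L[ℝ] (E × F) :=
    (LinearEquiv.ofInjectiveEndo (bifDeriv H u₀ w₀).toLinearMap hinj).toContinuousLinearEquiv
  have he : (e : E × F →L[ℝ] E × F) = bifDeriv H u₀ w₀ := by ext x <;> rfl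
  let N := e.toNonlinearRightInverse
  let N₀ := e.toNonlinearRightInverse
  -- enlarging the bound by `1` keeps it positive even when `E × F` is trivial
  let N : (e : E × F →L[ℝ] E × F).NonlinearRightInverse :=
    { toFun := N₀.toFun
      nnnorm := N₀.nnnorm + 1
      bound' := fun y => (N₀.bound' y).trans (by
        push_cast
        nlinarith [norm_nonneg y])
      right_inv' := N₀.right_inv' }
  have hNpos : 0 < N.nnnorm := add_pos_of_nonneg_of_pos zero_le one_pos
  set c : NNReal := N.nnnorm⁻¹ / 2 with hc
  have hcpos : 0 < c := by positivity
  have hcN : (N.nnnorm : ℝ)⁻¹ - c = c := by rw [hc]; push_cast; ring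
  -- derivative bound and differentiability on a fixed ball for all small `ε ≠ 0`
  have hclose := (tendsto_rescaled_deriv hH w₀).eventually (Metric.closedBall_mem_nhds _ hcpos)
  have hle : 𝓝[≠] (0 : ℝ) ×ˢ 𝓝 (u₀, w₀) ≤ 𝓝 (0, (u₀, w₀)) := by
    rw [nhds_prod_eq (x := (0 : ℝ))]; exact Filter.prod_mono nhdsWithin_le_nhds le_rfl
  have hdiff : ∀ᶠ p in 𝓝 (u₀, (0 : F), (0 : ℝ)), DifferentiableAt ℝ H p := by
    filter_upwards [hH.eventually (by simp)] with p hp using hp.differentiableAt (by norm_num)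
  have hp : Tendsto (fun q : ℝ × (E × F) => ((q.2.1, q.1 • q.2.2, q.1) : E × F × ℝ))
      (𝓝[≠] 0 ×ˢ 𝓝 (u₀, w₀)) (𝓝 (u₀, 0, 0)) := by
    have : Continuous (fun q : ℝ × (E × F) => ((q.2.1, q.1 • q.2.2, q.1) : E × F × ℝ)) := by
      fun_prop
    simpa using (this.tendsto (0, (u₀, w₀))).mono_left hle
  have hr : Tendsto (fun q : ℝ × (E × F) => ((q.2.1, 0, 0) : E × F × ℝ))
      (𝓝[≠] 0 ×ˢ 𝓝 (u₀, w₀)) (𝓝 (u₀, 0, 0)) := by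
    have : Continuous (fun q : ℝ × (E × F) => ((q.2.1, 0, 0) : E × F × ℝ)) := by
      fun_prop
    simpa using (this.tendsto (0, (u₀, w₀))).mono_left hle
  have hu : Tendsto (fun q : ℝ × (E × F) => q.2.1) (𝓝[≠] 0 ×ˢ 𝓝 (u₀, w₀)) (𝓝 u₀) :=
    (continuous_fst.tendsto (u₀, w₀)).comp tendsto_snd
  have hall := hclose.and ((hp.eventually hdiff).and ((hr.eventually hdiff).and
    ((hu.eventually h0.eventually_nhds).and
      ((tendsto_snd (f := 𝓝[≠] (0 : ℝ)) (g := 𝓝 (u₀, w₀))).eventually hU))))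
  obtain ⟨Pε, hPε, Px, hPx, hgood⟩ := eventually_prod_iff.1 hall
  obtain ⟨r, hr0, hrP⟩ := Metric.nhds_basis_closedBall.eventually_iff.1 hPx
  -- the rescaled maps at the centre converge to `bifMap H (u₀, w₀) = 0`
  have hcentre : Tendsto (fun ε : ℝ => ε⁻¹ • H (u₀, ε • w₀, ε)) (𝓝[≠] 0) (𝓝 0) := by
    have hlin : HasDerivAt (fun t : ℝ => ((u₀, t • w₀, t) : E × F × ℝ)) (0, w₀, 1) 0 := by
      simpa using (hasDerivAt_const (0 : ℝ) u₀).prodMk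
        (((hasDerivAt_id (0 : ℝ)).smul_const w₀).prodMk (hasDerivAt_id (0 : ℝ)))
    have hHd : HasFDerivAt H (fderiv ℝ H (u₀, 0, 0)) ((u₀, (0 : ℝ) • w₀, (0 : ℝ))) := by
      simpa using (hH.differentiableAt (by norm_num)).hasFDerivAt
    have hcd := hHd.comp_hasDerivAt (0 : ℝ) hlin
    have hz' : fderiv ℝ H (u₀, 0, 0) (0, w₀, 1) = 0 := hz
    rw [hz', hasDerivAt_iff_tendsto_slope_zero] at hcd
    simpa [h0.self_of_nhds] using hcd
  filter_upwards [hPε, eventually_mem_nhdsWithin,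
    hcentre.eventually (Metric.closedBall_mem_nhds _ (mul_pos (NNReal.coe_pos.2 hcpos) hr0))]
    with ε hε hε0 hsmall
  have hε0 : ε ≠ 0 := hε0
  have happrox : ApproximatesLinearOn (fun x : E × F => ε⁻¹ • H (x.1, ε • x.2, ε))
      (e : E × F →L[ℝ] E × F) (Metric.closedBall (u₀, w₀) r) c := by
    rw [he]
    intro x hx y hy
    refine Convex.norm_image_sub_le_of_norm_hasFDerivWithin_le'
      (f := fun x : E × F => ε⁻¹ • H (x.1, ε • x.2, ε)) (φ := bifDeriv H u₀ w₀)
      (f' := fun x => ((ε⁻¹ • (fderiv ℝ H (x.1, ε • x.2, ε) - fderiv ℝ H (x.1, 0, 0))).comp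
          (.inl ℝ E (F × ℝ))).comp (.fst ℝ E F) +
        ((fderiv ℝ H (x.1, ε • x.2, ε)).comp ((ContinuousLinearMap.inr ℝ E (F × ℝ)).comp
          (.inl ℝ F ℝ))).comp (.snd ℝ E F))
      (fun q hq => ?_) (fun q hq => ?_) (convex_closedBall (u₀, w₀) r) hy hx
    · obtain ⟨-, h1, h2, h3, -⟩ := hgood hε (hrP hq)
      exact (hasFDerivAt_rescaled hε0 h1 h2 h3).hasFDerivWithinAt
    · exact mem_closedBall_iff_norm.1 (hgood hε (hrP hq)).1
  have hsurj := happrox.surjOn_closedBall_of_nonlinearRightInverse N hr0.le subset_rfl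
  rw [hcN] at hsurj
  obtain ⟨x, hx, hx0⟩ := hsurj (a := 0) (by
    rw [Metric.mem_closedBall, dist_comm]; exact hsmall)
  refine ⟨x, (hgood hε (hrP hx)).2.2.2.2, ?_⟩
  simpa [hε0] using hx0

/-- Injectivity of the derivative of the bifurcation map.  Along the graph of `w`, where the
`F`-component of `bifMap H` vanishes, its `E`-component is the reduced map `f`, so the chain rule
gives `bifDeriv (h, Dw h) = (Df h, 0)`. -/
lemma injective_bifDeriv {H : E × F × ℝ → E × F} {u₀ : E} (hH : ContDiffAt ℝ 2 H (u₀, 0, 0))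
    {w : E → F} (hw : DifferentiableAt ℝ w u₀) {f : E → E}
    (hf : ∀ᶠ u in 𝓝 u₀, bifMap H (u, w u) = (f u, 0))
    (hDf : Function.Injective (fderiv ℝ f u₀))
    (hΔ : Function.Injective fun k : F => (fderiv ℝ H (u₀, 0, 0) (0, k, 0)).2) :
    Function.Injective (bifDeriv H u₀ (w u₀)) := by
  have h1 : HasFDerivAt (fun u => bifMap H (u, w u))
      ((bifDeriv H u₀ (w u₀)).comp ((ContinuousLinearMap.id ℝ E).prod (fderiv ℝ w u₀))) u₀ :=
    HasFDerivAt.comp (g := bifMap H) u₀ (hasFDerivAt_bifMap hH (w u₀))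
      ((hasFDerivAt_id u₀).prodMk hw.hasFDerivAt)
  have h2 := h1.congr_of_eventuallyEq (hf.mono fun u hu => hu.symm)
  have hfd : fderiv ℝ f u₀ = _ := h2.fst.fderiv
  have hsd := h2.snd.unique (hasFDerivAt_const (0 : F) u₀)
  have hchain : ∀ h, bifDeriv H u₀ (w u₀) (h, fderiv ℝ w u₀ h) = (fderiv ℝ f u₀ h, 0) := by
    intro h
    refine Prod.ext ?_ (DFunLike.congr_fun hsd h)
    rw [hfd]; rfl
  rw [injective_iff_map_eq_zero]
  rintro ⟨h, k⟩ hhk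
  have hdiff : bifDeriv H u₀ (w u₀) (0, k - fderiv ℝ w u₀ h) = (-fderiv ℝ f u₀ h, 0) := by
    have : ((0, k - fderiv ℝ w u₀ h) : E × F) = (h, k) - (h, fderiv ℝ w u₀ h) := by simp
    rw [this, map_sub, hhk, hchain]; simp
  have hval : bifDeriv H u₀ (w u₀) (0, k - fderiv ℝ w u₀ h) =
      fderiv ℝ H (u₀, 0, 0) (0, k - fderiv ℝ w u₀ h, 0) := by
    rw [bifDeriv_apply]
    have : ((0, 0, 0) : E × F × ℝ) = 0 := rfl
    rw [this, map_zero, zero_add]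
  have hk : k - fderiv ℝ w u₀ h = 0 := by
    apply hΔ
    have h00 : ((0, 0, 0) : E × F × ℝ) = 0 := rfl
    simp only [← hval, hdiff, h00, map_zero, Prod.snd_zero]
  have hh : h = 0 := by
    apply hDf
    have h00 : ((0, 0) : E × F) = 0 := rfl
    rw [hk, h00, map_zero] at hdiff
    rw [map_zero]
    exact neg_eq_zero.1 (congrArg Prod.fst hdiff).symm
  subst hh
  rw [map_zero, sub_zero] at hk
  rw [hk]; rfl

/-- `DH(u, 0, 0)` for the straightened map `H(u, y, ε) = g((u, v(u) + y), ε)`, in the directions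
transverse to the graph of `v`. -/
lemma fderiv_straighten {g : (E × F) × ℝ → P} {v : E → F} {u : E}
    (hg : DifferentiableAt ℝ g ((u, v u), 0)) (hv : DifferentiableAt ℝ v u) {g₁ : P}
    (hg₁ : HasDerivAt (fun ε : ℝ => g ((u, v u), ε)) g₁ 0) (k : F) (s : ℝ) :
    fderiv ℝ (fun p : E × F × ℝ => g ((p.1, v p.1 + p.2.1), p.2.2)) (u, 0, 0) (0, k, s) =
      fderiv ℝ (fun z => g (z, 0)) (u, v u) (0, k) + s • g₁ := by
  have h0 : HasFDerivAt (fun z : E × F => g (z, 0))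
      ((fderiv ℝ g ((u, v u), 0)).comp (.inl ℝ (E × F) ℝ)) (u, v u) :=
    HasFDerivAt.comp (g := g) (u, v u) hg.hasFDerivAt
      ((hasFDerivAt_id (u, v u)).prodMk (hasFDerivAt_const (0 : ℝ) (u, v u)))
  have h1 : g₁ = fderiv ℝ g ((u, v u), 0) (0, 1) :=
    hg₁.unique (HasFDerivAt.comp_hasDerivAt (l := g) (0 : ℝ) hg.hasFDerivAt
      ((hasDerivAt_const (0 : ℝ) (u, v u)).prodMk (hasDerivAt_id (0 : ℝ))))
  -- freezing `u` suffices, since the direction `(0, k, s)` does not move it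
  have hHd : DifferentiableAt ℝ (fun p : E × F × ℝ => g ((p.1, v p.1 + p.2.1), p.2.2))
      (u, 0, 0) := by
    have hin : DifferentiableAt ℝ
        (fun p : E × F × ℝ => (((p.1, v p.1 + p.2.1), p.2.2) : (E × F) × ℝ)) (u, 0, 0) := by
      have : DifferentiableAt ℝ (fun p : E × F × ℝ => v p.1) (u, 0, 0) :=
        DifferentiableAt.comp (g := v) (u, (0 : F), (0 : ℝ)) hv differentiableAt_fst
      fun_prop
    refine DifferentiableAt.comp (g := g) (u, (0 : F), (0 : ℝ)) ?_ hin
    simpa using hg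
  have hl : HasDerivAt (fun t : ℝ => ((u, t • k, t • s) : E × F × ℝ)) (0, k, s) 0 := by
    simpa using (hasDerivAt_const (0 : ℝ) u).prodMk
      (((hasDerivAt_id (0 : ℝ)).smul_const k).prodMk ((hasDerivAt_id (0 : ℝ)).smul_const s))
  have hA := HasFDerivAt.comp_hasDerivAt_of_eq (0 : ℝ) hHd.hasFDerivAt hl (by simp)
  have hl2 : HasDerivAt (fun t : ℝ => (((u, v u + t • k), t • s) : (E × F) × ℝ))
      ((0, k), s) 0 := by
    simpa using ((hasDerivAt_const (0 : ℝ) u).prodMk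
      (((hasDerivAt_id (0 : ℝ)).smul_const k).const_add (v u))).prodMk
        ((hasDerivAt_id (0 : ℝ)).smul_const s)
  have hB := HasFDerivAt.comp_hasDerivAt_of_eq (0 : ℝ) hg.hasFDerivAt hl2 (by simp)
  rw [hA.unique hB, h0.fderiv, h1]
  have : (((0, k), s) : (E × F) × ℝ) = ((0, k), 0) + s • (0, 1) := by simp
  rw [this, map_add, map_smul]
  rfl

/-- The `O(ε²)` remainder identifies `g₁(z)` as `∂g/∂ε (z, 0)`. -/
lemma hasDerivAt_of_sq_remainder {φ : ℝ → P} {a : P} {C ε₀ : ℝ} (hε₀ : 0 < ε₀)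
    (h : ∀ ε ∈ Ioo (-ε₀) ε₀, ‖φ ε - φ 0 - ε • a‖ ≤ C * ε ^ 2) : HasDerivAt φ a 0 := by
  rw [hasDerivAt_iff_isLittleO]
  have h1 : (fun ε : ℝ => φ ε - φ 0 - (ε - 0) • a) =O[𝓝 0] fun ε => ε ^ 2 := by
    refine IsBigO.of_bound C ?_
    filter_upwards [Ioo_mem_nhds (neg_lt_zero.2 hε₀) hε₀] with ε hε
    simpa using h ε hε
  refine h1.trans_isLittleO ?_
  simpa using isLittleO_pow_id (𝕜 := ℝ) (n := 2) (by norm_num)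

end

/-- Lyapunov–Schmidt reduction / persistence of simple zeros.  Here `ℝᵐ = ℝⁿ × ℝᵏ`
(with `k = m − n`, so `m ≥ n` automatically), `g(z,ε) = g₀(z) + εg₁(z) + O(ε²)` is `C²`,
`Z = {(u, v(u)) : u ∈ closure V}` consists of zeros of `g₀`, `Δ u` is the lower-right
block of `Dg₀(u, v(u))` (assumed invertible), and
`f₁(u) = π₁(g₁(z_u)) − Γ_u Δ_u⁻¹ π₂(g₁(z_u))` where `Γ_u` is the upper-right block.
A simple zero `u*` of `f₁` yields zeros of `g(·, ε)` converging to `(u*, v(u*))`. -/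
theorem stmt18 (n k : ℕ)
    (D : Set ((Fin n → ℝ) × (Fin k → ℝ))) (hD : IsOpen D)
    (V : Set (Fin n → ℝ)) (hVopen : IsOpen V) (hVbdd : Bornology.IsBounded V)
    (ε₀ : ℝ) (hε₀ : 0 < ε₀)
    (g : ((Fin n → ℝ) × (Fin k → ℝ)) × ℝ → (Fin n → ℝ) × (Fin k → ℝ))
    (g₀ g₁ : ((Fin n → ℝ) × (Fin k → ℝ)) → (Fin n → ℝ) × (Fin k → ℝ))
    (hg : ContDiffOn ℝ 2 g (D ×ˢ Ioo (-ε₀) ε₀))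
    (hg₀ : ∀ z, g₀ z = g (z, 0))
    (hg₁ : ContDiffOn ℝ 2 g₁ D)
    (hO : ∀ K ⊆ D, IsCompact K → ∃ C : ℝ, ∀ z ∈ K, ∀ ε ∈ Ioo (-ε₀) ε₀,
      ‖g (z, ε) - g₀ z - ε • g₁ z‖ ≤ C * ε ^ 2)
    (v : (Fin n → ℝ) → (Fin k → ℝ)) (hv : ContDiffOn ℝ 2 v (closure V))
    (hZD : ∀ u ∈ closure V, (u, v u) ∈ D)
    (hg₀Z : ∀ u ∈ closure V, g₀ (u, v u) = 0)
    (Δ : (Fin n → ℝ) → (Fin k → ℝ) →ₗ[ℝ] (Fin k → ℝ))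
    (hΔ : ∀ u ∈ closure V, ∀ w, Δ u w = (fderiv ℝ g₀ (u, v u) (0, w)).2)
    (hdet : ∀ u ∈ closure V, LinearMap.det (Δ u) ≠ 0)
    (f₁ : (Fin n → ℝ) → (Fin n → ℝ))
    (hf₁ : ∀ u ∈ closure V, ∃ w : Fin k → ℝ, Δ u w = (g₁ (u, v u)).2 ∧
      f₁ u = (g₁ (u, v u)).1 - (fderiv ℝ g₀ (u, v u) (0, w)).1)
    (ustar : Fin n → ℝ) (hustar : ustar ∈ V)
    (hzero : f₁ ustar = 0)
    (hsimple : LinearMap.det ((fderiv ℝ f₁ ustar).toLinearMap) ≠ 0) :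
    ∀ δ > 0, ∃ ε₁ > 0, ∀ ε : ℝ, ε ≠ 0 → |ε| < ε₁ →
      ∃ z ∈ D, g (z, ε) = 0 ∧ ‖z - (ustar, v ustar)‖ < δ := by
  intro δ hδ
  have hVn : ∀ {u}, u ∈ V → V ∈ 𝓝 u := fun hu => hVopen.mem_nhds hu
  have hcl : ∀ {u}, u ∈ V → u ∈ closure V := fun hu => subset_closure hu
  have hvat : ∀ u ∈ V, ContDiffAt ℝ 2 v u := fun u hu =>
    hv.contDiffAt (mem_of_superset (hVn hu) subset_closure)
  have hgat : ∀ u ∈ V, ContDiffAt ℝ 2 g ((u, v u), 0) := fun u hu =>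
    hg.contDiffAt (prod_mem_nhds (hD.mem_nhds (hZD u (hcl hu)))
      (Ioo_mem_nhds (neg_lt_zero.2 hε₀) hε₀))
  have hg₀' : g₀ = fun z => g (z, 0) := funext hg₀
  have hderiv : ∀ u ∈ V, HasDerivAt (fun ε : ℝ => g ((u, v u), ε)) (g₁ (u, v u)) 0 := by
    intro u hu
    obtain ⟨C, hC⟩ := hO {(u, v u)} (by simpa using hZD u (hcl hu)) isCompact_singleton
    refine hasDerivAt_of_sq_remainder (C := C) hε₀ fun ε hε => ?_
    simpa [hg₀] using hC (u, v u) rfl ε hε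
  -- straighten the graph of `v` to `{y = 0}`
  let H : (Fin n → ℝ) × (Fin k → ℝ) × ℝ → (Fin n → ℝ) × (Fin k → ℝ) :=
    fun p => g ((p.1, v p.1 + p.2.1), p.2.2)
  have hH : ContDiffAt ℝ 2 H (ustar, 0, 0) := by
    have hin : ContDiffAt ℝ 2 (fun p : (Fin n → ℝ) × (Fin k → ℝ) × ℝ =>
        (((p.1, v p.1 + p.2.1), p.2.2) : ((Fin n → ℝ) × (Fin k → ℝ)) × ℝ)) (ustar, 0, 0) := by
      have : ContDiffAt ℝ 2 (fun p : (Fin n → ℝ) × (Fin k → ℝ) × ℝ => v p.1) (ustar, 0, 0) :=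
        ContDiffAt.comp (g := v) (ustar, (0 : Fin k → ℝ), (0 : ℝ)) (hvat ustar hustar)
          contDiffAt_fst
      fun_prop
    refine ContDiffAt.comp (g := g) (ustar, (0 : Fin k → ℝ), (0 : ℝ)) ?_ hin
    simpa using hgat ustar hustar
  have h0 : ∀ᶠ u in 𝓝 ustar, H (u, 0, 0) = 0 := by
    filter_upwards [hVn hustar] with u hu
    simpa [H, ← hg₀] using hg₀Z u (hcl hu)
  have hDH : ∀ u ∈ V, ∀ (y : Fin k → ℝ) (s : ℝ), fderiv ℝ H (u, 0, 0) (0, y, s) =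
      fderiv ℝ g₀ (u, v u) (0, y) + s • g₁ (u, v u) := by
    intro u hu y s
    rw [hg₀']
    exact fderiv_straighten ((hgat u hu).differentiableAt (by norm_num))
      ((hvat u hu).differentiableAt (by norm_num)) (hderiv u hu) y s
  -- `L u` is `Δ u`, written through `DH` so that its smoothness in `u` is visible
  let L : (Fin n → ℝ) → (Fin k → ℝ) →L[ℝ] (Fin k → ℝ) := fun u =>
    (ContinuousLinearMap.snd ℝ (Fin n → ℝ) (Fin k → ℝ)).comp ((fderiv ℝ H (u, 0, 0)).comp
      ((ContinuousLinearMap.inr ℝ (Fin n → ℝ) ((Fin k → ℝ) × ℝ)).comp (.inl ℝ (Fin k → ℝ) ℝ)))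
  have hLΔ : ∀ u ∈ V, ∀ y, L u y = Δ u y := by
    intro u hu y
    have h1 : L u y = (fderiv ℝ H (u, 0, 0) (0, y, 0)).2 := rfl
    rw [h1, hDH u hu, hΔ u (hcl hu), zero_smul, add_zero]
  have hLinv : ∀ u ∈ V, (L u).IsInvertible := by
    intro u hu
    refine ⟨((Δ u).equivOfDetNeZero (hdet u (hcl hu))).toContinuousLinearEquiv, ?_⟩
    ext1 y
    exact (hLΔ u hu y).symm
  have hDHat : ContDiffAt ℝ 1 (fun u : Fin n → ℝ => fderiv ℝ H (u, 0, 0)) ustar :=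
    ContDiffAt.comp (g := fderiv ℝ H) ustar (hH.fderiv_right (by norm_num))
      (contDiffAt_id.prodMk contDiffAt_const)
  have hLat : ContDiffAt ℝ 1 L ustar :=
    contDiffAt_const.clm_comp (hDHat.clm_comp contDiffAt_const)
  -- the solution `w = -Δ⁻¹ π₂ g₁` of the transverse equation
  let w : (Fin n → ℝ) → (Fin k → ℝ) := fun u =>
    -(L u).inverse (fderiv ℝ H (u, 0, 0) (0, 0, 1)).2
  have hw : DifferentiableAt ℝ w ustar := by
    have hinv : ContDiffAt ℝ 1 (fun u => (L u).inverse) ustar :=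
      ContDiffAt.comp (g := ContinuousLinearMap.inverse) ustar
        (hLinv ustar hustar).contDiffAt_map_inverse hLat
    exact ((hinv.clm_apply (hDHat.clm_apply contDiffAt_const).snd).neg).differentiableAt
      (by norm_num)
  have hf : ∀ u ∈ V, bifMap H (u, w u) = (f₁ u, 0) := by
    intro u hu
    obtain ⟨ω, hω, hfω⟩ := hf₁ u (hcl hu)
    have hwω : w u = -ω := by
      have h1 : (fderiv ℝ H (u, 0, 0) (0, 0, 1)).2 = L u ω := by
        have h00 : ((0, 0) : (Fin n → ℝ) × (Fin k → ℝ)) = 0 := rfl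
        rw [hDH u hu, hLΔ u hu, hω, h00, map_zero, zero_add, one_smul]
      simp only [w, h1, (hLinv u hu).inverse_apply_self]
    have hneg : ((0, -ω) : (Fin n → ℝ) × (Fin k → ℝ)) = -(0, ω) := by simp
    have hval : bifMap H (u, w u) = -fderiv ℝ g₀ (u, v u) (0, ω) + g₁ (u, v u) := by
      rw [bifMap, hDH u hu, hwω, hneg, map_neg, one_smul]
    rw [hval]
    refine Prod.ext ?_ ?_
    · change _ = f₁ u
      rw [hfω, Prod.fst_add, Prod.fst_neg]; abel
    · rw [Prod.snd_add, Prod.snd_neg, ← hΔ u (hcl hu), hω]; simp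
  have hinj : Function.Injective (bifDeriv H ustar (w ustar)) := by
    refine injective_bifDeriv hH hw (f := f₁) ?_ ?_ ?_
    · filter_upwards [hVn hustar] with u hu using hf u hu
    · exact (LinearMap.equivOfDetNeZero _ hsimple).injective
    · have h1 : (fun y => (fderiv ℝ H (ustar, 0, 0) (0, y, 0)).2) = Δ ustar :=
        funext fun y => hLΔ ustar hustar y
      rw [h1]
      exact ((Δ ustar).equivOfDetNeZero (hdet ustar (hcl hustar))).injective
  have hz : bifMap H (ustar, w ustar) = 0 := by rw [hf ustar hustar, hzero]; rfl
  -- the zero found for parameter `ε` is `(u, v(u) + εy)` with `(u, y)` near `(u*, w(u*))`;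
  -- membership in `D` and closeness hold jointly for `ε` small and `(u, y)` near that point
  have hT : Tendsto (fun q : ℝ × ((Fin n → ℝ) × (Fin k → ℝ)) =>
      ((q.2.1, v q.2.1 + q.1 • q.2.2) : (Fin n → ℝ) × (Fin k → ℝ)))
      (𝓝 0 ×ˢ 𝓝 (ustar, w ustar)) (𝓝 (ustar, v ustar)) := by
    rw [← nhds_prod_eq]
    have hvc : ContinuousAt (fun q : ℝ × ((Fin n → ℝ) × (Fin k → ℝ)) => v q.2.1)
        (0, (ustar, w ustar)) :=
      ContinuousAt.comp (g := v) (x := ((0 : ℝ), (ustar, w ustar)))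
        (hvat ustar hustar).continuousAt (by fun_prop)
    have : ContinuousAt (fun q : ℝ × ((Fin n → ℝ) × (Fin k → ℝ)) =>
        ((q.2.1, v q.2.1 + q.1 • q.2.2) : (Fin n → ℝ) × (Fin k → ℝ))) (0, (ustar, w ustar)) := by
      fun_prop
    simpa [ContinuousAt] using this
  obtain ⟨Pε, hPε, Px, hPx, hgood⟩ := eventually_prod_iff.1 (hT.eventually
    ((hD.eventually_mem (hZD ustar (hcl hustar))).and (Metric.ball_mem_nhds _ hδ)))
  have hmain := (exists_zero_of_bifMap hH h0 (w ustar) hz hinj hPx).and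
    (hPε.filter_mono nhdsWithin_le_nhds)
  rw [eventually_nhdsWithin_iff, Metric.eventually_nhds_iff] at hmain
  obtain ⟨ε₁, hε₁, hev⟩ := hmain
  refine ⟨ε₁, hε₁, fun ε hε hεlt => ?_⟩
  obtain ⟨⟨x, hxP, hx0⟩, hPεε⟩ := hev (by simpa using hεlt) hε
  obtain ⟨hxD, hxδ⟩ := hgood hPεε hxP
  exact ⟨_, hxD, hx0, mem_ball_iff_norm.1 hxδ⟩
end
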